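/- arXiv:math/0703097 — 2 statements merged into one kernel-verified Lean document; each statement's English description precedes it below -/
import Mathlib

section
/- Let s ≠ 0 and c ≠ 0 be real, let ν(x) = c·x^(s−1) for x > 0, and let E > 0. With ν'(E) and ν''(E) the first and second derivatives of ν at E, and R = 1/(ν(E) + E·ν'(E)), the bed-drag coefficient of the general model evaluated at γ = 1 reduces to the power-law value: 5/2 + (5/48)·E·ν(E)·R²·(2·ν'(E) + E·ν''(E)) = (5/48)·(25 − 1/s). -/
/-!
With `P = E ^ (s - 1)`, the derivatives are `ν' = c (s - 1) P / E` and
`ν'' = c (s - 1) (s - 2) P / E²`. Hence `ν + E ν' = s c P` and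
`2 ν' + E ν'' = s (s - 1) c P / E`, so that `E ν R² (2 ν' + E ν'') = 1 - 1 / s`, and
`5 / 2 = (5 / 48) * 24` gives the claim.
-/

theorem deriv_const_mul_rpow (c p : ℝ) {x : ℝ} (hx : 0 < x) :
    deriv (fun y : ℝ => c * y ^ p) x = c * p * x ^ (p - 1) := by
  rw [((Real.hasDerivAt_rpow_const (p := p) (Or.inl hx.ne')).const_mul c).deriv]
  ring

/-- For the power-law viscosity `ν(x) = c x^(s−1)` (`s ≠ 0`, `c ≠ 0`)
and `E > 0`, with `ν'(E)`, `ν''(E)` the first and second derivatives of `ν` at `E` and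
`R = 1/(ν(E) + E ν'(E))`, the bed-drag coefficient of the general model at `γ = 1`
reduces to the power-law value:
`5/2 + (5/48) E ν(E) R² (2 ν'(E) + E ν''(E)) = (5/48)(25 − 1/s)`. -/
theorem bed_drag_coefficient_power_law
    (s c E : ℝ) (hs : s ≠ 0) (hc : c ≠ 0) (hE : 0 < E) :
    let ν : ℝ → ℝ := fun x => c * x ^ (s - 1)
    let ν' : ℝ := deriv ν E
    let ν'' : ℝ := deriv (deriv ν) E
    let R : ℝ := 1 / (ν E + E * ν')
    5 / 2 + (5 / 48) * E * ν E * R ^ 2 * (2 * ν' + E * ν'')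
      = (5 / 48) * (25 - 1 / s) := by
  intro ν ν' ν'' R
  have h1 : ν' = c * (s - 1) * (E ^ (s - 1) / E) := by
    rw [← Real.rpow_sub_one hE.ne']
    exact deriv_const_mul_rpow c (s - 1) hE
  have h2 : ν'' = c * (s - 1) * (s - 1 - 1) * (E ^ (s - 1) / E / E) := by
    rw [← Real.rpow_sub_one hE.ne', ← Real.rpow_sub_one hE.ne']
    -- The formula for `deriv ν` holds on all of `(0, ∞)`, a neighbourhood of `E`.
    have hev : deriv ν =ᶠ[nhds E] fun x => c * (s - 1) * x ^ (s - 1 - 1) := by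
      filter_upwards [lt_mem_nhds hE] with x hx
      exact deriv_const_mul_rpow c (s - 1) hx
    exact hev.deriv_eq.trans (deriv_const_mul_rpow _ _ hE)
  have hP : E ^ (s - 1) ≠ 0 := (Real.rpow_pos_of_pos hE _).ne'
  have hν : ν E = c * E ^ (s - 1) := rfl
  have hE' : E ≠ 0 := hE.ne'
  have hR : R = 1 / (s * c * E ^ (s - 1)) := by
    have hd : ν E + E * ν' = s * c * E ^ (s - 1) := by
      rw [h1, hν]
      field_simp
      ring
    rw [← hd]
  rw [hR, h1, h2, hν]
  generalize E ^ (s - 1) = P at hP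
  field_simp
  ring
end

section
/- Let s ≠ 0 and c ≠ 0 be real, let ν(x) = c·x^(s−1) for x > 0, and let E > 0. With ν'(E) and ν''(E) the first and second derivatives of ν at E, and R = 1/(ν(E) + E·ν'(E)), the self-advection coefficient of the general model evaluated at γ = 1 reduces to the power-law value: 7/4 − 13/48 + (1/96)·E·R²·(38·ν(E)·ν'(E) + 12·E·(ν'(E))² + 13·E·ν(E)·ν''(E)) = (167 − 25/s)/96. -/
/-!
Put `p = E ^ (s - 1)`. Then `ν = c p`, `E ν' = c (s - 1) p`, `E² ν'' = c (s - 1) (s - 2) p` and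
`R = 1 / (s c p)`, so `p`, `c` and `E` cancel from the nonlinear term, which becomes
`(s - 1) (38 + 12 (s - 1) + 13 (s - 2)) / s² = 25 (s - 1) / s`, up to the factor `1 / 96`.
Adding `7/4 - 13/48 = 142/96` gives the claim.
-/

/-- First derivative of the power law on the positive half-line, with the power of `x` kept as
`x ^ a / x` so that later algebra involves a single real power. -/
lemma hasDerivAt_const_mul_rpow (c a : ℝ) {x : ℝ} (hx : 0 < x) :
    HasDerivAt (fun y : ℝ => c * y ^ a) (c * a * (x ^ a / x)) x := by
  have h := (Real.hasDerivAt_rpow_const (p := a) (Or.inl hx.ne')).const_mul c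
  rw [Real.rpow_sub_one hx.ne'] at h
  refine h.congr_deriv ?_
  ring


/-- For the power-law viscosity `ν(x) = c x^(s−1)` (`s ≠ 0`, `c ≠ 0`)
and `E > 0`, with `ν'(E)`, `ν''(E)` the first and second derivatives of `ν` at `E` and
`R = 1/(ν(E) + E ν'(E))`, the self-advection coefficient of the general model at `γ = 1`
reduces to the power-law value:
`7/4 − 13/48 + (1/96) E R² (38 ν(E) ν'(E) + 12 E ν'(E)² + 13 E ν(E) ν''(E))
  = (167 − 25/s)/96`. -/
theorem self_advection_coefficient_power_law
    (s c E : ℝ) (hs : s ≠ 0) (hc : c ≠ 0) (hE : 0 < E) :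
    let ν : ℝ → ℝ := fun x => c * x ^ (s - 1)
    let ν' : ℝ := deriv ν E
    let ν'' : ℝ := deriv (deriv ν) E
    let R : ℝ := 1 / (ν E + E * ν')
    7 / 4 - 13 / 48
        + (1 / 96) * E * R ^ 2
            * (38 * ν E * ν' + 12 * E * ν' ^ 2 + 13 * E * ν E * ν'')
      = (167 - 25 / s) / 96 := by
  intro ν ν' ν'' R
  have h1 : ν' = c * (s - 1) * (E ^ (s - 1) / E) :=
    (hasDerivAt_const_mul_rpow c (s - 1) hE).deriv
  have h2 : ν'' = c * (s - 1) * (s - 2) * (E ^ (s - 1) / E ^ 2) := by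
    -- The formula for `deriv ν` holds near `E`, which is all that differentiating it again needs.
    have hev : deriv ν =ᶠ[nhds E] fun x => c * (s - 1) * x ^ (s - 1 - 1) := by
      filter_upwards [lt_mem_nhds hE] with x hx
      rw [(hasDerivAt_const_mul_rpow c (s - 1) hx).deriv, Real.rpow_sub_one hx.ne' (s - 1)]
    have h := hev.deriv_eq.trans (hasDerivAt_const_mul_rpow (c * (s - 1)) (s - 1 - 1) hE).deriv
    rw [Real.rpow_sub_one hE.ne' (s - 1)] at h
    refine h.trans ?_
    field_simp
    ring
  have hp : E ^ (s - 1) ≠ 0 := (Real.rpow_pos_of_pos hE _).ne'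
  have h0 : ν E = c * E ^ (s - 1) := rfl
  have hR : R = 1 / (s * c * E ^ (s - 1)) := by
    have hden : ν E + E * ν' = s * c * E ^ (s - 1) := by
      rw [h0, h1]
      field_simp
      ring
    change 1 / (ν E + E * ν') = _
    rw [hden]
  rw [hR, h0, h1, h2]
  generalize E ^ (s - 1) = p at hp ⊢
  field_simp
  ring
end
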